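/- If each of the sets T_1, …, T_k ⊆ S satisfies the SEC condition V(s) = bexit_V(T_i) for all s ∈ T_i, where V = lfp(B), then V is a fixpoint of the deflated Bellman operator B^D := deflate_{T_k} ∘ ⋯ ∘ deflate_{T_1} ∘ B, and consequently lfp(B^D) ≤ V. -/

import Mathlib

/-!
The Bellman operator is monotone, so by Knaster–Tarski `V = lfpOf G.bellman` satisfies
`B V = V` (`SSG.bellman_mono`, `OrderHom.map_lfp`). The SEC condition on `T` says that on `T`
the cap `bexit_V(T)` equals `V`, so `deflate_T V = V`; folding over the list leaves `V` fixed.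
A fixpoint is in particular a prefixpoint, which bounds the least fixpoint from above.
-/

noncomputable section
open Classical Finset

instance : Fact ((0:ℝ) ≤ 1) := ⟨zero_le_one⟩

/-- A finite simple stochastic game: states are partitioned into Maximizer states
(`isMax`) and Minimizer states, each state has a nonempty finite set of available
actions, the transition function is a probability distribution for every available
action, and `F` is the set of goal states. -/
structure SSG (S A : Type) [Fintype S] [Nonempty S] [Fintype A] where
  isMax : S → Prop
  Av : S → Finset A
  avNonempty : ∀ s, (Av s).Nonempty
  tr : S → A → S → ℝ
  tr_nonneg : ∀ s a, a ∈ Av s → ∀ s', 0 ≤ tr s a s'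
  tr_sum : ∀ s a, a ∈ Av s → ∑ s', tr s a s' = 1
  F : Set S

variable {S A : Type} [Fintype S] [Nonempty S] [Fintype A]

/-- The expected value `Σ_{s'} δ(s,a,s')·f(s')` of `f` after playing `a` in `s`. -/
def SSG.sumR (G : SSG S A) (f : S → unitInterval) (s : S) (a : A) : ℝ :=
  ∑ s', G.tr s a s' * (f s' : ℝ)

lemma SSG.sumR_mem (G : SSG S A) (f : S → unitInterval) {s : S} {a : A} (ha : a ∈ G.Av s) :
    G.sumR f s a ∈ Set.Icc (0 : ℝ) 1 := by
  constructor
  · exact Finset.sum_nonneg fun s' _ => mul_nonneg (G.tr_nonneg s a ha s') (f s').2.1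
  · calc ∑ s', G.tr s a s' * (f s' : ℝ) ≤ ∑ s', G.tr s a s' * 1 := by
          refine Finset.sum_le_sum fun s' _ => ?_
          exact mul_le_mul_of_nonneg_left (f s').2.2 (G.tr_nonneg s a ha s')
    _ = 1 := by simpa using G.tr_sum s a ha

/-- The Bellman operator: `1` on goal states, the maximum over available actions at
Maximizer states, the minimum over available actions at Minimizer states.
Value functions are maps `S → [0,1]`, ordered pointwise. -/
noncomputable def SSG.bellman (G : SSG S A) (f : S → unitInterval) : S → unitInterval :=
  fun s =>
    if s ∈ G.F then 1
    else if G.isMax s then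
      (G.Av s).attach.sup' (Finset.attach_nonempty_iff.mpr (G.avNonempty s))
        (fun a => (⟨G.sumR f s a.1, G.sumR_mem f a.2⟩ : unitInterval))
    else
      (G.Av s).attach.inf' (Finset.attach_nonempty_iff.mpr (G.avNonempty s))
        (fun a => (⟨G.sumR f s a.1, G.sumR_mem f a.2⟩ : unitInterval))

/-- The Knaster–Tarski least fixpoint of an operator on a complete lattice. -/
def lfpOf {P : Type*} [CompleteLattice P] (Φ : P → P) : P := sInf {x | Φ x ≤ x}

/-- Exiting state-action pairs of `T`: a Maximizer state `s ∈ T` together with an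
available action `a` whose set of successors `Post(s,a) = {s' | δ(s,a,s') > 0}`
is not contained in `T`. -/
noncomputable def SSG.exits (G : SSG S A) (T : Set S) : Finset (S × A) :=
  Finset.univ.filter (fun p =>
    p.1 ∈ T ∧ G.isMax p.1 ∧ p.2 ∈ G.Av p.1 ∧ ¬ ({s' | 0 < G.tr p.1 p.2 s'} ⊆ T))

lemma SSG.exits_av (G : SSG S A) {T : Set S} {p : S × A} (hp : p ∈ G.exits T) :
    p.2 ∈ G.Av p.1 :=
  (Finset.mem_filter.mp hp).2.2.2.1

/-- The best exit from `T` according to `f`: the maximum of `Σ_{s'} δ(s,a,s')·f(s')`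
over all exiting state-action pairs of `T`, with the maximum over the empty set
defined to be `0`. -/
noncomputable def SSG.bexit (G : SSG S A) (T : Set S) (f : S → unitInterval) : unitInterval :=
  (G.exits T).attach.fold (· ⊔ ·) 0
    (fun p => (⟨G.sumR f p.1.1 p.1.2, G.sumR_mem f (G.exits_av p.2)⟩ : unitInterval))

/-- The deflate operator: on `T` it caps the estimate by the best exit of `T`,
outside of `T` it leaves the estimate unchanged. -/
noncomputable def SSG.deflate (G : SSG S A) (T : Set S) (f : S → unitInterval) :
    S → unitInterval :=
  fun s => if s ∈ T then min (f s) (G.bexit T f) else f s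

lemma SSG.sumR_mono (G : SSG S A) {f g : S → unitInterval} (h : f ≤ g) {s : S} {a : A}
    (ha : a ∈ G.Av s) : G.sumR f s a ≤ G.sumR g s a :=
  Finset.sum_le_sum fun s' _ => mul_le_mul_of_nonneg_left (h s') (G.tr_nonneg s a ha s')

lemma SSG.bellman_mono (G : SSG S A) : Monotone G.bellman := by
  intro f g h s
  unfold SSG.bellman
  split_ifs
  · exact le_rfl
  · exact Finset.sup'_mono_fun fun a _ => G.sumR_mono h a.2
  · exact Finset.inf'_mono_fun fun a _ => G.sumR_mono h a.2

lemma SSG.bellman_lfpOf (G : SSG S A) : G.bellman (lfpOf G.bellman) = lfpOf G.bellman :=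
  OrderHom.map_lfp ⟨G.bellman, G.bellman_mono⟩

lemma SSG.deflate_eq_self (G : SSG S A) {T : Set S} {f : S → unitInterval}
    (h : ∀ s ∈ T, f s = G.bexit T f) : G.deflate T f = f := by
  funext s
  unfold SSG.deflate
  split_ifs with hs
  · rw [← h s hs, min_self]
  · rfl

lemma SSG.foldl_deflate_eq_self (G : SSG S A) (Ts : List (Set S)) {f : S → unitInterval}
    (h : ∀ T ∈ Ts, ∀ s ∈ T, f s = G.bexit T f) :
    Ts.foldl (fun g T => G.deflate T g) f = f := by
  induction Ts with
  | nil => rfl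
  | cons T Ts ih =>
    rw [List.foldl_cons, G.deflate_eq_self (h T List.mem_cons_self)]
    exact ih fun T' hT' => h T' (List.mem_cons_of_mem T hT')

/-- If each `T_i` satisfies the SEC condition, then the value `V = lfp(B)` is a
fixpoint of the deflated Bellman operator `B^D = deflate_{T_k} ∘ ⋯ ∘ deflate_{T_1} ∘ B`,
and consequently `lfp(B^D) ≤ V`. -/
theorem SSG.deflatedBellman_fixpoint (G : SSG S A) (Ts : List (Set S))
    (hSEC : ∀ T ∈ Ts, ∀ s ∈ T, lfpOf G.bellman s = G.bexit T (lfpOf G.bellman)) :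
    Ts.foldl (fun g T => G.deflate T g) (G.bellman (lfpOf G.bellman)) = lfpOf G.bellman ∧
      lfpOf (fun f : S → unitInterval =>
        Ts.foldl (fun g T => G.deflate T g) (G.bellman f)) ≤ lfpOf G.bellman := by
  have hfix : Ts.foldl (fun g T => G.deflate T g) (G.bellman (lfpOf G.bellman)) =
      lfpOf G.bellman := by
    rw [G.bellman_lfpOf]
    exact G.foldl_deflate_eq_self Ts hSEC
  exact ⟨hfix, sInf_le hfix.le⟩
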